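/- arXiv:1201.1921 — 9 statements merged into one kernel-verified Lean document; each statement's English description precedes it below -/
import Mathlib

section
/- Let V and W be vector spaces over ℂ, let B : V →ₗ[ℂ] W →ₗ[ℂ] ℂ be a bilinear pairing, and let μ ∈ ℂ with μ ≠ 0 and μ ≠ 1. Suppose w : ℕ → V and z : ℕ → W are families of vectors such that for all k, l ∈ ℕ, B (w k) (z l) equals 1 if k = l, equals μ if k < l, and equals μ⁻¹ if l < k. Then the family w is linearly independent over ℂ. -/
/-!
Consecutive differences of the `z l` make the pairing triangular: `B (w k) (z (N + 1) - z N)` is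
`0` for `k < N` and `μ - 1 ≠ 0` for `k = N`. Pairing a nontrivial relation among the `w k` whose
largest index is `N` with `z (N + 1) - z N` therefore forces its leading coefficient to vanish.
-/

theorem torus_pairing_w_linearIndependent
    (V W : Type*) [AddCommGroup V] [Module ℂ V] [AddCommGroup W] [Module ℂ W]
    (B : V →ₗ[ℂ] W →ₗ[ℂ] ℂ) (μ : ℂ) (hμ0 : μ ≠ 0) (hμ1 : μ ≠ 1)
    (w : ℕ → V) (z : ℕ → W)
    (h : ∀ k l : ℕ, B (w k) (z l) =
      if k = l then 1 else if k < l then μ else μ⁻¹) :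
    LinearIndependent ℂ w := by
  have hlt : ∀ k N : ℕ, k < N → B (w k) (z (N + 1) - z N) = 0 := by
    intro k N hk
    rw [map_sub, h, h, if_neg (by omega), if_pos (by omega), if_neg (by omega), if_pos hk, sub_self]
  have heq : ∀ N : ℕ, B (w N) (z (N + 1) - z N) = μ - 1 := by
    intro N
    rw [map_sub, h, h, if_neg (by omega), if_pos (by omega), if_pos rfl]
  rw [linearIndependent_iff]
  intro c hc
  by_contra hne
  have hs : c.support.Nonempty := Finsupp.support_nonempty_iff.mpr hne
  set N := c.support.max' hs with hN
  have hmem : N ∈ c.support := c.support.max'_mem hs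
  have hpair : B (Finsupp.linearCombination ℂ w c) (z (N + 1) - z N) = c N * (μ - 1) := by
    rw [Finsupp.linearCombination_apply, Finsupp.sum, map_sum, LinearMap.sum_apply,
      Finset.sum_eq_single_of_mem N hmem]
    · rw [map_smul, LinearMap.smul_apply, heq, smul_eq_mul]
    · intro k hk hkN
      rw [map_smul, LinearMap.smul_apply,
        hlt k N (lt_of_le_of_ne (c.support.le_max' k hk) hkN), smul_zero]
  rw [hc, map_zero, LinearMap.zero_apply] at hpair
  exact mul_ne_zero (Finsupp.mem_support_iff.mp hmem) (sub_ne_zero.mpr hμ1) hpair.symm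
end

section
/- Let V and W be vector spaces over ℂ, let B : V →ₗ[ℂ] W →ₗ[ℂ] ℂ be a bilinear pairing, and let μ ∈ ℂ with μ ≠ 0 and μ ≠ 1. Suppose w : ℕ → V and z : ℕ → W are families of vectors such that for all k, l ∈ ℕ, B (w k) (z l) equals 1 if k = l, equals μ if k < l, and equals μ⁻¹ if l < k. Then the family z is linearly independent over ℂ. -/
/-!
Pairing with `w (k + 1) - w k` kills every `z l` except `z k` and `z (k + 1)`, so a relation
`∑ c l • z l = 0` yields `(1 - μ) * (c (k + 1) + μ⁻¹ * c k) = 0` for every `k`. Since `μ ≠ 0, 1`,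
`c (k + 1) = 0` forces `c k = 0`; a nonzero finitely supported `c` violates this at the largest
index of its support.
-/

theorem torus_pairing_z_linearIndependent
    (V W : Type*) [AddCommGroup V] [Module ℂ V] [AddCommGroup W] [Module ℂ W]
    (B : V →ₗ[ℂ] W →ₗ[ℂ] ℂ) (μ : ℂ) (hμ0 : μ ≠ 0) (hμ1 : μ ≠ 1)
    (w : ℕ → V) (z : ℕ → W)
    (h : ∀ k l : ℕ, B (w k) (z l) =
      if k = l then 1 else if k < l then μ else μ⁻¹) :
    LinearIndependent ℂ z := by
  have hdiff : ∀ k l : ℕ, B (w (k + 1) - w k) (z l) =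
      (if l = k + 1 then 1 - μ else 0) + (if l = k then (1 - μ) * μ⁻¹ else 0) := by
    intro k l
    rw [map_sub, LinearMap.sub_apply, h, h]
    have hinv : (1 - μ) * μ⁻¹ = μ⁻¹ - 1 := by field_simp
    rw [hinv]
    rcases lt_trichotomy l k with hl | rfl | hl
    · simp [show k + 1 ≠ l by omega, show ¬ k + 1 < l by omega, show k ≠ l by omega,
        show ¬ k < l by omega, show l ≠ k + 1 by omega, show l ≠ k by omega]
    · simp
    · rcases eq_or_ne l (k + 1) with rfl | hne
      · simp
      · simp [hne, hne.symm, show k + 1 < l by omega, show k ≠ l by omega, hl,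
          show l ≠ k by omega]
  rw [linearIndependent_iff]
  intro c hc
  have hrec : ∀ k, c (k + 1) * (1 - μ) + c k * ((1 - μ) * μ⁻¹) = 0 := by
    intro k
    have hk := congrArg (B (w (k + 1) - w k)) hc
    rw [Finsupp.linearCombination_apply, Finsupp.sum, map_sum, map_zero] at hk
    simp only [map_smul, hdiff, smul_eq_mul, mul_add, mul_ite, mul_zero,
      Finset.sum_add_distrib, Finset.sum_ite_eq'] at hk
    simp only [Finsupp.mem_support_iff] at hk
    by_cases h1 : c (k + 1) = 0 <;> by_cases h2 : c k = 0 <;> simpa [h1, h2] using hk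
  by_contra hne
  have hs : c.support.Nonempty := Finsupp.support_nonempty_iff.mpr hne
  have hmem := Finset.max'_mem _ hs
  set m := c.support.max' hs with hm
  have hsucc : c (m + 1) = 0 := by
    by_contra hcm
    have := Finset.le_max' c.support (m + 1) (Finsupp.mem_support_iff.mpr hcm)
    omega
  have hr := hrec m
  rw [hsucc, zero_mul, zero_add] at hr
  exact mul_ne_zero (Finsupp.mem_support_iff.mp hmem)
    (mul_ne_zero (sub_ne_zero.mpr hμ1.symm) (inv_ne_zero hμ0)) hr
end

section
/- Let V and W be vector spaces over ℂ, let B : V →ₗ[ℂ] W →ₗ[ℂ] ℂ be a bilinear pairing, and let μ ∈ ℂ with μ ≠ 0 and μ ≠ 1. Suppose w : ℕ → V and z : ℕ → W are families of vectors such that for all k, l ∈ ℕ, B (w k) (z l) equals 1 if k = l, equals μ if k < l, and equals μ⁻¹ if l < k. Then V is not finite dimensional over ℂ. -/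
/-!
The family `w` is linearly independent. The difference `z m - z (m + 1)` pairs to `0` with every
`w k`, `k < m`, and to `1 - μ ≠ 0` with `w m`. So pairing a nontrivial linear relation among the
`w k` with `z m - z (m + 1)`, where `m` is the largest index occurring in the relation, shows that
the leading coefficient vanishes, a contradiction.
-/

theorem torus_pairing_infinite_dimensional
    (V W : Type*) [AddCommGroup V] [Module ℂ V] [AddCommGroup W] [Module ℂ W]
    (B : V →ₗ[ℂ] W →ₗ[ℂ] ℂ) (μ : ℂ) (hμ0 : μ ≠ 0) (hμ1 : μ ≠ 1)
    (w : ℕ → V) (z : ℕ → W)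
    (h : ∀ k l : ℕ, B (w k) (z l) =
      if k = l then 1 else if k < l then μ else μ⁻¹) :
    ¬ FiniteDimensional ℂ V := by
  intro hfin
  have hlt : ∀ k m : ℕ, k < m → B (w k) (z m - z (m + 1)) = 0 := by
    intro k m hkm
    rw [map_sub, h, h, if_neg (by omega), if_pos hkm, if_neg (by omega), if_pos (by omega),
      sub_self]
  have hdiag : ∀ m : ℕ, B (w m) (z m - z (m + 1)) = 1 - μ := by
    intro m
    rw [map_sub, h, h, if_pos rfl, if_neg (by omega), if_pos (by omega)]
  have hli : LinearIndependent ℂ w := by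
    rw [linearIndependent_iff]
    intro c hc
    by_contra hne
    have hs : c.support.Nonempty := Finsupp.support_nonempty_iff.mpr hne
    set m := c.support.max' hs
    have hm : m ∈ c.support := c.support.max'_mem hs
    have hpair : B (Finsupp.linearCombination ℂ w c) (z m - z (m + 1)) = c m * (1 - μ) := by
      rw [Finsupp.linearCombination_apply, Finsupp.sum, map_sum, LinearMap.sum_apply,
        Finset.sum_eq_single_of_mem m hm]
      · rw [map_smul, LinearMap.smul_apply, hdiag, smul_eq_mul]
      · intro k hk hkm
        rw [map_smul, LinearMap.smul_apply,
          hlt k m (lt_of_le_of_ne (c.support.le_max' k hk) hkm), smul_zero]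
    rw [hc, map_zero, LinearMap.zero_apply] at hpair
    exact mul_ne_zero (Finsupp.mem_support_iff.mp hm) (sub_ne_zero.mpr hμ1.symm) hpair.symm
  have : Finite ℕ := hli.finite
  exact not_finite ℕ
end

section
/- Let μ ∈ ℂ with μ ≠ 0, and for each natural number n ≥ 1 let M n be the n × n complex matrix whose (i, j) entry is 1 if i = j, μ if i < j, and μ⁻¹ if j < i. Then for every n ≥ 1, det (M (n + 1)) = (1 - μ⁻¹) · det (M n) + (1 - μ)^(n - 1) · (μ⁻¹ - 1). -/
/-!
Write `a = μ` and `b = μ⁻¹`. The first column of the matrix of size `n + 1` is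
`(1 - b) • e₀ + b • (1, …, 1)`, so its determinant splits by linearity in that column. The `e₀` part
contributes `(1 - b)` times the determinant of size `n`. In the other part, subtracting `a` times
the all-ones first column from every other column leaves a lower triangular matrix with diagonal
`1, 1 - a, …, 1 - a`, which contributes `b (1 - a) ^ n`. Since `b a = 1`, this is
`(1 - a) ^ (n - 1) * (b - 1)`.
-/

/-- The truncated pairing matrix of size `n`: entries are `1` on the diagonal,
`μ` above the diagonal, and `μ⁻¹` below the diagonal. -/
noncomputable def truncatedMatrix (μ : ℂ) (n : ℕ) : Matrix (Fin n) (Fin n) ℂ :=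
  Matrix.of fun i j => if i = j then 1 else if i < j then μ else μ⁻¹

lemma det_updateCol_single (μ : ℂ) (n : ℕ) :
    ((truncatedMatrix μ (n + 1)).updateCol 0 (Pi.single 0 1)).det = (truncatedMatrix μ n).det := by
  rw [Matrix.det_succ_column_zero, Fin.sum_univ_succ]
  simp only [Matrix.updateCol_self, Pi.single_eq_same, Pi.single_eq_of_ne (Fin.succ_ne_zero _)]
  simp only [Fin.val_zero, pow_zero, mul_zero, zero_mul, Finset.sum_const_zero, add_zero, one_mul]
  congr 1
  ext i j
  simp [truncatedMatrix]

lemma det_updateCol_one (μ : ℂ) (n : ℕ) :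
    ((truncatedMatrix μ (n + 1)).updateCol 0 1).det = (1 - μ) ^ n := by
  -- The triangular matrix left after subtracting `μ` times column `0` from the other columns.
  let L : Matrix (Fin (n + 1)) (Fin (n + 1)) ℂ :=
    Matrix.of fun i j => if j = 0 then 1 else truncatedMatrix μ (n + 1) i j - μ
  have hL : ((truncatedMatrix μ (n + 1)).updateCol 0 1).det = L.det := by
    rw [← Matrix.det_transpose, ← Matrix.det_transpose L]
    refine Matrix.det_eq_of_forall_row_eq_smul_add_const
      (fun j => if j = 0 then 0 else μ) 0 (by simp) fun j i => ?_
    by_cases hj : j = 0 <;> simp [L, hj]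
  rw [hL, Matrix.det_of_isLowerTriangular, Fin.prod_univ_succ]
  · simp [L, truncatedMatrix]
  · intro i j hij
    have hij : i < j := hij
    have hj : j ≠ 0 := Fin.ne_zero_of_lt hij
    simp [L, truncatedMatrix, hj, hij, hij.ne]

theorem truncatedMatrix_det_recursion (μ : ℂ) (hμ : μ ≠ 0) :
    ∀ n : ℕ, n ≥ 1 →
      (truncatedMatrix μ (n + 1)).det =
        (1 - μ⁻¹) * (truncatedMatrix μ n).det + (1 - μ) ^ (n - 1) * (μ⁻¹ - 1) := by
  intro n hn
  have hcol : truncatedMatrix μ (n + 1) = (truncatedMatrix μ (n + 1)).updateCol 0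
      ((1 - μ⁻¹) • Pi.single 0 1 + μ⁻¹ • 1) := by
    ext i j
    by_cases hj : j = 0
    · subst hj
      by_cases hi : i = 0 <;> simp [truncatedMatrix, hi]
    · simp [hj]
  rw [hcol, Matrix.det_updateCol_add, Matrix.det_updateCol_smul, Matrix.det_updateCol_smul,
    det_updateCol_single, det_updateCol_one]
  obtain ⟨m, rfl⟩ : ∃ m, n = m + 1 := ⟨n - 1, by omega⟩
  rw [Nat.add_sub_cancel]
  congr 1
  field_simp
  ring
end

section
/- Let μ ∈ ℂ with μ ≠ 0, let f : ℂ → ℂ be defined by f a = μ⁻¹ · (1 - a), and for each natural number n ≥ 1 let M n be the n × n complex matrix whose (i, j) entry is 1 if i = j, μ if i < j, and μ⁻¹ if j < i. Then for every n ≥ 1, det (M n) = (1 - μ)^(n - 1) · f^[n-1] (1), where f^[n-1] denotes the (n-1)-fold iterate of f. -/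
/-- The truncated matrix of size `n + 1` with its top left entry replaced by `a`. -/
noncomputable def cornerMatrix (μ a : ℂ) (n : ℕ) : Matrix (Fin (n + 1)) (Fin (n + 1)) ℂ :=
  Matrix.of fun i j =>
    if i = j then (if i = 0 then a else 1) else if i < j then μ else μ⁻¹

lemma cornerMatrix_one (μ : ℂ) (n : ℕ) : cornerMatrix μ 1 n = truncatedMatrix μ (n + 1) := by
  ext i j
  simp [cornerMatrix, truncatedMatrix]

/-- Recursion obtained by subtracting row `1` from row `0` and expanding along row `0`. -/
lemma det_cornerMatrix_succ (μ a : ℂ) (n : ℕ) :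
    (cornerMatrix μ a (n + 1)).det =
      (a - μ⁻¹) * (cornerMatrix μ 1 n).det + (1 - μ) * (cornerMatrix μ μ⁻¹ n).det := by
  rw [← Matrix.det_updateRow_add_smul_self (cornerMatrix μ a (n + 1))
    (i := 0) (j := 1) (by simp) (-1), Matrix.det_succ_row_zero, Fin.sum_univ_succ,
    Fin.sum_univ_succ, Finset.sum_eq_zero]
  · have h1 : ((cornerMatrix μ a (n + 1)).updateRow 0
        (cornerMatrix μ a (n + 1) 0 + (-1 : ℂ) • cornerMatrix μ a (n + 1) 1)).submatrix
          Fin.succ (Fin.succAbove 0) = cornerMatrix μ 1 n := by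
      ext i j
      simp [cornerMatrix, Matrix.updateRow_apply]
    -- Deleting row `0` and column `1` puts `μ⁻¹` in the corner.
    have h2 : ((cornerMatrix μ a (n + 1)).updateRow 0
        (cornerMatrix μ a (n + 1) 0 + (-1 : ℂ) • cornerMatrix μ a (n + 1) 1)).submatrix
          Fin.succ (Fin.succAbove (Fin.succ 0)) = cornerMatrix μ μ⁻¹ n := by
      ext i j
      refine Fin.cases ?_ (fun j => ?_) j
      · by_cases hi : i = 0 <;> simp [cornerMatrix, Matrix.updateRow_apply, hi]
      · rw [Matrix.submatrix_apply, Fin.succ_succAbove_succ, Fin.succAbove_zero]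
        by_cases hi : i = j.succ
        · simp [cornerMatrix, Matrix.updateRow_apply, hi]
        · simp [cornerMatrix, Matrix.updateRow_apply, hi]
    rw [h1, h2]
    simp [cornerMatrix]
    ring
  · intro j _
    have h : (1 : Fin (n + 2)) < j.succ.succ := by
      simp [Fin.lt_def]
    have h0 : (0 : Fin (n + 2)) < j.succ.succ := Fin.succ_pos _
    simp [cornerMatrix, h, h.ne, h0, h0.ne]

lemma det_cornerMatrix_inv (μ : ℂ) (n : ℕ) :
    (cornerMatrix μ μ⁻¹ n).det = μ⁻¹ * (1 - μ) ^ n := by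
  induction n with
  | zero => simp [cornerMatrix]
  | succ n ih => rw [det_cornerMatrix_succ, ih]; ring

theorem truncatedMatrix_det_closed_form (μ : ℂ) (hμ : μ ≠ 0)
    (f : ℂ → ℂ) (hf : ∀ a, f a = μ⁻¹ * (1 - a)) :
    ∀ n : ℕ, n ≥ 1 →
      (truncatedMatrix μ n).det = (1 - μ) ^ (n - 1) * f^[n - 1] 1 := by
  intro n hn
  obtain ⟨n, rfl⟩ := Nat.exists_eq_add_of_le' hn
  rw [← cornerMatrix_one, Nat.add_sub_cancel]
  clear hn
  induction n with
  | zero => simp [cornerMatrix]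
  | succ n ih =>
    rw [det_cornerMatrix_succ, ih, det_cornerMatrix_inv, Function.iterate_succ_apply', hf]
    field_simp
    ring
end

section
/- Let μ ∈ ℂ with μ ≠ 0, and for a ∈ ℂ and a natural number m ≥ 1 let 𝓑 a m be the m × m complex matrix whose first row has a in position (0,0) and a - (1 - μ) in positions (0, j) for j > 0, and whose (i, j) entry for i > 0 is μ⁻¹ if j < i, 1 if j = i, and μ if i < j. Let f : ℂ → ℂ be defined by f a = μ⁻¹ · (1 - a). Then for every m ≥ 1 and every a ∈ ℂ, det (𝓑 a (m + 1)) = (1 - μ) · det (𝓑 (f a) m). -/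
/-!
Subtracting `μ⁻¹` times row `0` from row `1` turns row `1` into
`(f a, f a, f a - (1 - μ), …, f a - (1 - μ))`. Columns `0` and `1` then agree except in row `0`,
so subtracting column `1` from column `0` leaves `(1 - μ, 0, …, 0)` as the first column.
Deleting row `0` and column `0` gives exactly `auxMatrix μ (f a) m`, and the Laplace expansion
along the first column is the claimed identity.
-/

/-- The paper's auxiliary matrix `ℬ(a, m)`: the first row has `a` in position
`(0,0)` and `a - (1 - μ)` in positions `(0, j)` for `j > 0`; for `i > 0` the
`(i, j)` entry is `μ⁻¹` if `j < i`, `1` if `j = i`, and `μ` if `i < j`. -/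
noncomputable def auxMatrix (μ a : ℂ) (m : ℕ) : Matrix (Fin m) (Fin m) ℂ :=
  Matrix.of fun i j =>
    if (i : ℕ) = 0 then (if (j : ℕ) = 0 then a else a - (1 - μ))
    else if j < i then μ⁻¹ else if i = j then 1 else μ

theorem auxMatrix_det_step (μ : ℂ) (hμ : μ ≠ 0)
    (f : ℂ → ℂ) (hf : ∀ a, f a = μ⁻¹ * (1 - a)) :
    ∀ m : ℕ, m ≥ 1 → ∀ a : ℂ,
      (auxMatrix μ a (m + 1)).det = (1 - μ) * (auxMatrix μ (f a) m).det := by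
  intro m hm a
  obtain ⟨n, rfl⟩ : ∃ n, m = n + 1 := ⟨m - 1, by omega⟩
  set A := auxMatrix μ a (n + 1 + 1) with hA
  set B := A.updateRow 1 (A 1 + (-μ⁻¹) • A 0) with hB
  set C := B.updateCol 0 (fun k => B k 0 + (-1 : ℂ) • B k 1) with hC
  have hBA : B.det = A.det := Matrix.det_updateRow_add_smul_self A (by simp) _
  have hCB : C.det = B.det := Matrix.det_updateCol_add_smul_self B (by simp) _
  have h00 : C 0 0 = 1 - μ := by
    simp [hC, hB, hA, auxMatrix, Matrix.updateRow_apply]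
  have hs0 : ∀ i : Fin (n + 1), C i.succ 0 = 0 := by
    intro i
    refine Fin.cases ?_ (fun i => ?_) i
    · simp [hC, hB, hA, auxMatrix]
      field_simp
      ring
    · have h1 : (1 : Fin (n + 1 + 1)) < i.succ.succ := by
        simp [Fin.lt_def]
      simp [hC, hB, hA, auxMatrix, Matrix.updateRow_apply, h1, h1.ne']
  have hsub : C.submatrix Fin.succ Fin.succ = auxMatrix μ (f a) (n + 1) := by
    ext i j
    refine Fin.cases ?_ (fun i => ?_) i
    · refine Fin.cases ?_ (fun j => ?_) j
      · simp [hC, hB, hA, auxMatrix, hf]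
        field_simp
        ring
      · have h1 : (1 : Fin (n + 1 + 1)) < j.succ.succ := by
          simp [Fin.lt_def]
        simp [hC, hB, hA, auxMatrix, hf, h1.not_gt, h1.ne]
        field_simp
        ring
    · have h1 : (1 : Fin (n + 1 + 1)) < i.succ.succ := by
        simp [Fin.lt_def]
      simp [hC, hB, hA, auxMatrix, Matrix.updateRow_apply, h1.ne']
  rw [← hBA, ← hCB, Matrix.det_succ_column_zero, Fin.sum_univ_succ]
  have h0 : C.submatrix (Fin.succAbove 0) Fin.succ = auxMatrix μ (f a) (n + 1) := by
    rw [← hsub, Fin.succAbove_zero]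
  simp only [h0, h00, hs0]
  simp
end

section
/- Let μ ∈ ℂ with μ ≠ 0, and for a ∈ ℂ and a natural number m ≥ 1 let 𝓑 a m be the m × m complex matrix whose first row has a in position (0,0) and a - (1 - μ) in positions (0, j) for j > 0, and whose (i, j) entry for i > 0 is μ⁻¹ if j < i, 1 if j = i, and μ if i < j. Let f : ℂ → ℂ be defined by f a = μ⁻¹ · (1 - a). Then for every m ≥ 1 and every a ∈ ℂ, det (𝓑 a m) = (1 - μ)^(m - 1) · f^[m-1] (a), where f^[m-1] denotes the (m-1)-fold iterate of f. -/
lemma auxMatrix_det_succ (μ : ℂ) (hμ : μ ≠ 0) (a : ℂ) (n : ℕ) :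
    (auxMatrix μ a (n + 2)).det = (1 - μ) * (auxMatrix μ (μ⁻¹ * (1 - a)) (n + 1)).det := by
  set M := auxMatrix μ a (n + 2) with hM
  set C := M.updateCol 0 (fun k => M k 0 + (-1 : ℂ) • M k 1) with hC
  set R := C.updateRow 1 (C 1 + (-μ⁻¹) • C 0) with hR
  have h01 : (0 : Fin (n + 2)) ≠ 1 := by simp
  have hCdet : C.det = M.det := Matrix.det_updateCol_add_smul_self M h01 _
  have hRdet : R.det = C.det := Matrix.det_updateRow_add_smul_self C h01.symm _
  have hR0 : R 0 0 = 1 - μ := by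
    simp [hR, hC, hM, auxMatrix, Matrix.updateRow_apply]
  have hRs : ∀ i : Fin (n + 1), R i.succ 0 = 0 := by
    intro i
    refine Fin.cases ?_ (fun k => ?_) i
    · simp [hR, hC, hM, auxMatrix, Matrix.updateRow_apply]
      field_simp
      ring
    · have h1 : k.succ.succ ≠ (1 : Fin (n + 2)) := by simp [Fin.ext_iff]
      have h2 : (1 : Fin (n + 2)) < k.succ.succ := by simp [Fin.lt_def]
      simp [hR, hC, hM, auxMatrix, Matrix.updateRow_apply, h1, h2]
  have hsub : R.submatrix Fin.succ Fin.succ = auxMatrix μ (μ⁻¹ * (1 - a)) (n + 1) := by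
    ext i j
    refine Fin.cases ?_ (fun k => ?_) i
    · refine Fin.cases ?_ (fun l => ?_) j
      · simp [hR, hC, hM, auxMatrix, Matrix.updateRow_apply]
        field_simp
        ring
      · have h1 : (1 : Fin (n + 2)) ≠ l.succ.succ := by simp [Fin.ext_iff]
        have h2 : ¬ l.succ.succ < (1 : Fin (n + 2)) := by simp [Fin.lt_def]
        simp [hR, hC, hM, auxMatrix, Matrix.updateRow_apply, h1, h2]
        field_simp
        ring
    · have h1 : k.succ.succ ≠ (1 : Fin (n + 2)) := by simp [Fin.ext_iff]
      simp [hR, hC, hM, auxMatrix, Matrix.updateRow_apply, h1]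
  rw [← hCdet, ← hRdet, Matrix.det_succ_column_zero, Fin.sum_univ_succ]
  simp [hR0, hRs, ← hsub, Fin.succAbove_zero]

theorem auxMatrix_det_closed_form (μ : ℂ) (hμ : μ ≠ 0)
    (f : ℂ → ℂ) (hf : ∀ a, f a = μ⁻¹ * (1 - a)) :
    ∀ m : ℕ, m ≥ 1 → ∀ a : ℂ,
      (auxMatrix μ a m).det = (1 - μ) ^ (m - 1) * f^[m - 1] a := by
  intro m hm
  induction m, hm using Nat.le_induction with
  | base => intro a; simp [auxMatrix]
  | succ m hm ih =>
    intro a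
    obtain ⟨n, rfl⟩ := Nat.exists_eq_add_of_le' hm
    rw [auxMatrix_det_succ μ hμ, ih, ← hf]
    simp [pow_succ']
    ring
end

section
/- Let μ ∈ ℂ with μ ≠ 0 and μ ≠ 1, and for each natural number n ≥ 1 let M n be the n × n complex matrix whose (i, j) entry is 1 if i = j, μ if i < j, and μ⁻¹ if j < i. Then for every n ≥ 1, det (M n) ≠ 0 or det (M (n + 1)) ≠ 0; that is, no two truncated matrices of consecutive sizes are both singular. -/
/-- Consecutive rows agree outside the columns `i` and `i + 1`, so their difference is a
two-term relation between neighbouring coordinates of a kernel vector. -/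
lemma kernel_step (μ : ℂ) (hμ0 : μ ≠ 0) (hμ1 : μ ≠ 1) (n : ℕ) (v : Fin (n + 1) → ℂ)
    (hv : (truncatedMatrix μ (n + 1)).mulVec v = 0) (i : Fin n) :
    v i.succ = -μ⁻¹ * v i.castSucc := by
  have h1 := congrFun hv i.castSucc
  have h2 := congrFun hv i.succ
  simp only [Matrix.mulVec, dotProduct, Pi.zero_apply] at h1 h2
  have h3 : ∑ j, (truncatedMatrix μ (n + 1) i.castSucc j
      - truncatedMatrix μ (n + 1) i.succ j) * v j = 0 := by
    simp only [sub_mul, Finset.sum_sub_distrib, h1, h2, sub_zero]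
  have hne : i.castSucc ≠ i.succ := (Fin.castSucc_lt_succ (i := i)).ne
  rw [Finset.sum_eq_add i.castSucc i.succ hne] at h3
  · simp only [truncatedMatrix, Matrix.of_apply, if_true, if_neg hne, if_neg hne.symm,
      if_pos (Fin.castSucc_lt_succ (i := i)),
      if_neg (Fin.castSucc_lt_succ (i := i)).not_gt] at h3
    have h4 : μ - 1 ≠ 0 := sub_ne_zero.mpr hμ1
    apply mul_left_cancel₀ h4
    linear_combination h3 + v i.castSucc * mul_inv_cancel₀ hμ0
  · rintro j - ⟨hj1, hj2⟩
    have : (i.castSucc < j ↔ i.succ < j) := by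
      simp only [Fin.lt_def, ne_eq, Fin.ext_iff, Fin.val_castSucc, Fin.val_succ] at *
      omega
    simp [truncatedMatrix, hj1.symm, hj2.symm, this]
  · simp
  · simp

lemma geom_relation_of_det_eq_zero (μ : ℂ) (hμ0 : μ ≠ 0) (hμ1 : μ ≠ 1) (n : ℕ)
    (h : (truncatedMatrix μ (n + 1)).det = 0) :
    μ⁻¹ * ∑ k ∈ Finset.range n, (-μ⁻¹) ^ k + (-μ⁻¹) ^ n = 0 := by
  obtain ⟨v, hv0, hv⟩ := Matrix.exists_mulVec_eq_zero_iff.mpr h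
  have hgeom : ∀ i : Fin (n + 1), v i = (-μ⁻¹) ^ (i : ℕ) * v 0 := by
    intro i
    induction i using Fin.induction with
    | zero => simp
    | succ i ih =>
      rw [kernel_step μ hμ0 hμ1 n v hv i, ih, Fin.val_succ, Fin.val_castSucc, pow_succ]
      ring
  have hv00 : v 0 ≠ 0 := by
    intro h0
    apply hv0
    funext i
    rw [hgeom i, h0, mul_zero, Pi.zero_apply]
  have hlast := congrFun hv (Fin.last n)
  simp only [Matrix.mulVec, dotProduct, Pi.zero_apply, Fin.sum_univ_castSucc] at hlast
  have hentry : ∀ j : Fin n,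
      truncatedMatrix μ (n + 1) (Fin.last n) j.castSucc * v j.castSucc
        = μ⁻¹ * (-μ⁻¹) ^ (j : ℕ) * v 0 := by
    intro j
    rw [hgeom]
    simp [truncatedMatrix, (Fin.castSucc_lt_last j).ne', (Fin.castSucc_lt_last j).not_gt, mul_assoc]
  have hdiag : truncatedMatrix μ (n + 1) (Fin.last n) (Fin.last n) = 1 := by
    simp [truncatedMatrix]
  simp only [hentry, hdiag] at hlast
  rw [hgeom (Fin.last n), ← Finset.sum_mul, ← Finset.mul_sum, Fin.val_last,
    Fin.sum_univ_eq_sum_range (fun k => (-μ⁻¹) ^ k) n] at hlast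
  apply mul_right_cancel₀ hv00
  linear_combination hlast

theorem no_two_consecutive_singular (μ : ℂ) (hμ0 : μ ≠ 0) (hμ1 : μ ≠ 1) :
    ∀ n : ℕ, n ≥ 1 →
      (truncatedMatrix μ n).det ≠ 0 ∨ (truncatedMatrix μ (n + 1)).det ≠ 0 := by
  intro n hn
  obtain ⟨m, rfl⟩ := Nat.exists_eq_add_of_le' hn
  by_contra! hcon
  have h1 := geom_relation_of_det_eq_zero μ hμ0 hμ1 m hcon.1
  have h2 := geom_relation_of_det_eq_zero μ hμ0 hμ1 (m + 1) hcon.2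
  rw [Finset.sum_range_succ, pow_succ] at h2
  have h3 : (-μ⁻¹) ^ m ≠ 0 := pow_ne_zero _ (neg_ne_zero.mpr (inv_ne_zero hμ0))
  apply h3
  linear_combination h1 - h2
end

section
/- Let μ ∈ ℂ with μ ≠ 0 and μ ≠ 1, and for each natural number n ≥ 1 let M n be the n × n complex matrix whose (i, j) entry is 1 if i = j, μ if i < j, and μ⁻¹ if j < i. Then the set { n : ℕ | n ≥ 1 ∧ det (M n) ≠ 0 } is infinite. -/
lemma truncatedMatrix_row_sub (μ : ℂ) (m : ℕ) (i : Fin m) (j : Fin (m + 1)) :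
    truncatedMatrix μ (m + 1) i.castSucc j - truncatedMatrix μ (m + 1) i.succ j =
      (if i.castSucc = j then 1 - μ⁻¹ else 0) + (if i.succ = j then μ - 1 else 0) := by
  simp only [truncatedMatrix, Matrix.of_apply, Fin.ext_iff, Fin.lt_def, Fin.val_castSucc,
    Fin.val_succ]
  split_ifs <;> first | omega | ring

lemma geom_of_det_eq_zero (μ : ℂ) (hμ0 : μ ≠ 0) (hμ1 : μ ≠ 1) (m : ℕ)
    (h : (truncatedMatrix μ (m + 1)).det = 0) :
    1 + μ * ∑ i ∈ Finset.range m, (-μ⁻¹) ^ (i + 1) = 0 := by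
  obtain ⟨v, hv, hMv⟩ := Matrix.exists_mulVec_eq_zero_iff.mpr h
  have hrow : ∀ a, ∑ j, truncatedMatrix μ (m + 1) a j * v j = 0 := fun a => congrFun hMv a
  have hstep : ∀ i : Fin m, v i.succ = -μ⁻¹ * v i.castSucc := by
    intro i
    have h1 : ∑ j, (truncatedMatrix μ (m + 1) i.castSucc j
        - truncatedMatrix μ (m + 1) i.succ j) * v j = 0 := by
      simp only [sub_mul, Finset.sum_sub_distrib, hrow, sub_zero]
    simp only [truncatedMatrix_row_sub, add_mul, Finset.sum_add_distrib, ite_mul, zero_mul,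
      Finset.sum_ite_eq, Finset.mem_univ, if_true] at h1
    have h2 : (μ - 1) * (v i.succ - -μ⁻¹ * v i.castSucc) = 0 := by
      rw [← h1]
      field_simp
      ring
    exact sub_eq_zero.mp ((mul_eq_zero.mp h2).resolve_left (sub_ne_zero.mpr hμ1))
  have hgeom : ∀ i : Fin (m + 1), v i = (-μ⁻¹) ^ (i : ℕ) * v 0 := by
    intro i
    induction i using Fin.induction with
    | zero => simp
    | succ i ih =>
      rw [hstep, ih, Fin.val_succ, Fin.val_castSucc]
      ring
  have hv0 : v 0 ≠ 0 := by
    intro h0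
    exact hv (funext fun i => by simp [hgeom i, h0])
  have htop := hrow 0
  rw [Fin.sum_univ_succ] at htop
  have hentry : ∀ i : Fin m, truncatedMatrix μ (m + 1) 0 i.succ * v i.succ
      = μ * (-μ⁻¹) ^ ((i : ℕ) + 1) * v 0 := by
    intro i
    rw [hgeom i.succ, Fin.val_succ]
    simp [truncatedMatrix, (Fin.succ_ne_zero i).symm, mul_assoc]
  have hdiag : truncatedMatrix μ (m + 1) 0 0 = 1 := by simp [truncatedMatrix]
  simp only [hentry, hdiag, ← Finset.sum_mul, ← Finset.mul_sum, ← add_mul] at htop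
  rw [← Fin.sum_univ_eq_sum_range (fun i => (-μ⁻¹) ^ (i + 1)) m]
  exact (mul_eq_zero.mp htop).resolve_right hv0

theorem infinitely_many_nonsingular_truncations (μ : ℂ) (hμ0 : μ ≠ 0) (hμ1 : μ ≠ 1) :
    {n : ℕ | n ≥ 1 ∧ (truncatedMatrix μ n).det ≠ 0}.Infinite := by
  rw [Set.infinite_iff_exists_gt]
  intro a
  by_cases h1 : (truncatedMatrix μ (a + 1)).det = 0
  · refine ⟨a + 2, ⟨by omega, fun h2 => ?_⟩, by omega⟩
    have e1 := geom_of_det_eq_zero μ hμ0 hμ1 a h1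
    have e2 := geom_of_det_eq_zero μ hμ0 hμ1 (a + 1) h2
    rw [Finset.sum_range_succ, mul_add, ← add_assoc, e1, zero_add] at e2
    exact mul_ne_zero hμ0 (pow_ne_zero _ (neg_ne_zero.mpr (inv_ne_zero hμ0))) e2
  · exact ⟨a + 1, ⟨by omega, h1⟩, by omega⟩
end
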